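/- arXiv:1607.01342 — 2 statements merged into one kernel-verified Lean document; each statement's English description precedes it below -/
import Mathlib

section
/- Fix an integer n ≥ 2, and let W = x² + y^{2n} and V = x² + xyⁿ in ℂ[x,y]. For every nonzero c ∈ ℂ, the ℂ-algebra homomorphism ℂ[x,y] → Q_V determined by x ↦ 0 and y ↦ c·[y] descends to a well-defined isomorphism of graded ℂ-algebras φ_c : Q_W → Q_V (both Milnor rings having weights (1/2, 1/(2n)) and monomial basis {1, y, y², …, y^{2n−2}}). Moreover, there exists a nonzero c ∈ ℂ for which φ_c also preserves the pairings. -/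
open MvPolynomial
open scoped TensorProduct

noncomputable section

namespace LG

variable {σ : Type*} [Fintype σ] [DecidableEq σ]

/-- The Jacobian ideal of a polynomial `W`, generated by its partial derivatives. -/
def jacobianIdeal (W : MvPolynomial σ ℂ) : Ideal (MvPolynomial σ ℂ) :=
  Ideal.span (Set.range fun i => pderiv i W)

/-- The Milnor ring (local algebra) `Q_W = ℂ[x]/(∂W/∂x₁,…,∂W/∂xₙ)`. -/
abbrev MilnorRing (W : MvPolynomial σ ℂ) :=
  MvPolynomial σ ℂ ⧸ jacobianIdeal W

/-- The canonical projection onto the Milnor ring. -/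
def mkQ (W : MvPolynomial σ ℂ) : MvPolynomial σ ℂ →ₐ[ℂ] MilnorRing W :=
  Ideal.Quotient.mkₐ ℂ (jacobianIdeal W)

/-- `W` is quasihomogeneous with (positive rational) weights `q`:
every monomial `x^a` occurring in `W` satisfies `∑ i, a i * q i = 1`. -/
def IsQuasiHomogeneous (W : MvPolynomial σ ℂ) (q : σ → ℚ) : Prop :=
  (∀ i, 0 < q i) ∧ ∀ a ∈ W.support, ∑ i, (a i : ℚ) * q i = 1

/-- `W` is nondegenerate: the origin is the only common zero of its partial
derivatives. -/
def Nondegenerate (W : MvPolynomial σ ℂ) : Prop :=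
  ∀ x : σ → ℂ, (∀ i, eval x (pderiv i W) = 0) → x = 0

/-- `W` is admissible with weights `q`: nondegenerate, quasihomogeneous with
uniquely determined weights, and without cross-term monomials `xᵢxⱼ` (`i ≠ j`). -/
def Admissible (W : MvPolynomial σ ℂ) (q : σ → ℚ) : Prop :=
  Nondegenerate W ∧ IsQuasiHomogeneous W q ∧
    (∀ q', IsQuasiHomogeneous W q' → q' = q) ∧
    ∀ a ∈ W.support, ∀ i j, i ≠ j → a ≠ Finsupp.single i 1 + Finsupp.single j 1

/-- The Hessian of `W`: the determinant of the matrix of second partial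
derivatives. -/
def hess (W : MvPolynomial σ ℂ) : MvPolynomial σ ℂ :=
  Matrix.det (Matrix.of fun i j => pderiv i (pderiv j W))

/-- The homogeneous component of the Milnor ring of weighted degree `d`:
the image in `Q_W` of the span of the monomials of weighted degree `d`. -/
def gradedPiece (W : MvPolynomial σ ℂ) (q : σ → ℚ) (d : ℚ) :
    Submodule ℂ (MilnorRing W) :=
  (weightedHomogeneousSubmodule ℂ q d).map (mkQ W).toLinearMap

/-- The top weighted degree `∑ᵢ (1 - 2qᵢ)` of the Milnor ring. -/
def topDegree (q : σ → ℚ) : ℚ := ∑ i, (1 - 2 * q i)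

/-- The part of the Milnor ring of weighted degree below the top degree. -/
def belowTop (W : MvPolynomial σ ℂ) (q : σ → ℚ) : Submodule ℂ (MilnorRing W) :=
  ⨆ (d : ℚ) (_ : d < topDegree q), gradedPiece W q d

/-- `p` is the pairing of the Milnor ring of `W`: the top weighted-degree
homogeneous component of `a * b` equals `(p a b / μ) • [Hess W]`, i.e.
`a * b - (p a b / μ) • [Hess W]` lies in the part of degree `< topDegree q`. -/
def IsMilnorPairing (W : MvPolynomial σ ℂ) (q : σ → ℚ)
    (p : MilnorRing W → MilnorRing W → ℂ) : Prop :=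
  ∀ a b : MilnorRing W,
    a * b - (p a b / (Module.finrank ℂ (MilnorRing W) : ℂ)) • mkQ W (hess W)
      ∈ belowTop W q

/-- The rescaling substitution `xᵢ ↦ ζᵢ · xᵢ`. -/
def scaleVars (ζ : σ → ℂ) : MvPolynomial σ ℂ →ₐ[ℂ] MvPolynomial σ ℂ :=
  aeval fun i => C (ζ i) * X i

/-- `φ : Q_W → Q_V` is equivariant for the diagonal symmetry `ζ`, expressed on
representatives: the action of `ζ` sends the class of `p` to
`det ζ • [p ∘ ζ]`, and `φ` intertwines the two actions. -/
def EquivariantAt (W V : MvPolynomial σ ℂ)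
    (φ : MilnorRing W → MilnorRing V) (ζ : σ → ℂ) : Prop :=
  ∀ p r : MvPolynomial σ ℂ, φ (mkQ W p) = mkQ V r →
    φ ((∏ i, ζ i) • mkQ W (scaleVars ζ p)) = (∏ i, ζ i) • mkQ V (scaleVars ζ r)

/-- `φ : Q_W → Q_V` preserves the weighted grading. -/
def PreservesGrading {σ τ : Type*} [Fintype σ] [DecidableEq σ]
    [Fintype τ] [DecidableEq τ]
    {W : MvPolynomial σ ℂ} {V : MvPolynomial τ ℂ}
    (φ : MilnorRing W → MilnorRing V) (qW : σ → ℚ) (qV : τ → ℚ) : Prop :=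
  ∀ d : ℚ, ∀ a ∈ gradedPiece W qW d, φ a ∈ gradedPiece V qV d

/-- `φ : Q_W → Q_V` preserves the pairings: `⟨a,b⟩_{Q_W} = ⟨φ a, φ b⟩_{Q_V}`. -/
def PreservesPairings {σ τ : Type*} [Fintype σ] [DecidableEq σ]
    [Fintype τ] [DecidableEq τ]
    {W : MvPolynomial σ ℂ} {V : MvPolynomial τ ℂ}
    (φ : MilnorRing W → MilnorRing V) (qW : σ → ℚ) (qV : τ → ℚ) : Prop :=
  ∀ pW pV, IsMilnorPairing W qW pW → IsMilnorPairing V qV pV →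
    ∀ a b, pW a b = pV (φ a) (φ b)

end LG

open LG

/-- `W = x² + y^{2n}`. -/
def W7 (n : ℕ) : MvPolynomial (Fin 2) ℂ := X 0 ^ 2 + X 1 ^ (2 * n)

/-- `V = x² + xyⁿ`. -/
def V7 (n : ℕ) : MvPolynomial (Fin 2) ℂ := X 0 ^ 2 + X 0 * X 1 ^ n

/-- the common weights `(1/2, 1/(2n))`. -/
def q7 (n : ℕ) : Fin 2 → ℚ := ![1 / 2, 1 / (2 * (n : ℚ))]

/-!
Killing `∂W/∂x` and `∂W/∂y` leaves `x = 0`, `y^{2n-1} = 0`, while killing `∂V/∂x` and `∂V/∂y`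
leaves `x = -yⁿ/2`, `y^{2n-1} = 0`. So both Milnor rings are `ℂ[y]/(y^{2n-1})`, with `x`
restricted to a curve `x = t yⁿ` that is homogeneous for the weights, and `y ↦ c y` is a graded
isomorphism between them. The pairing reads off the coefficient of `y^{2n-2}` relative to that of
the Hessian, which is `4n(2n-1)` for `W` and `-n(2n-1)` for `V`; hence `φ_c` preserves the pairings
as soon as `c^{2n-2} = -1/4`.
-/

namespace LG

theorem exists_ne_zero_pow_eq {K : Type*} [Field K] [IsAlgClosed K] {m : ℕ} (hm : m ≠ 0) {z : K}
    (hz : z ≠ 0) : ∃ c : K, c ≠ 0 ∧ c ^ m = z := by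
  obtain ⟨c, rfl⟩ := IsAlgClosed.exists_pow_nat_eq z hm.bot_lt
  exact ⟨c, ne_zero_pow hm hz, rfl⟩

theorem X_pow_dvd_monomial {R : Type*} [CommSemiring R] (m : ℕ) (r : R) :
    Polynomial.X ^ m ∣ Polynomial.monomial m r := by
  rw [← Polynomial.C_mul_X_pow_eq_monomial]
  exact dvd_mul_left _ _

section MilnorRing

variable {σ : Type*}

theorem mkQ_surjective (W : MvPolynomial σ ℂ) : Function.Surjective (mkQ W) :=
  Ideal.Quotient.mk_surjective

theorem mkQ_eq_zero_iff {W p : MvPolynomial σ ℂ} : mkQ W p = 0 ↔ p ∈ jacobianIdeal W :=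
  Ideal.Quotient.eq_zero_iff_mem

theorem mkQ_pderiv (W : MvPolynomial σ ℂ) (i : σ) : mkQ W (pderiv i W) = 0 :=
  mkQ_eq_zero_iff.2 (Ideal.subset_span ⟨i, rfl⟩)

theorem isQuasiHomogeneous_of_isWeightedHomogeneous [Fintype σ] {W : MvPolynomial σ ℂ} {q : σ → ℚ}
    (hq : ∀ i, 0 < q i) (hW : IsWeightedHomogeneous q W 1) : IsQuasiHomogeneous W q := by
  refine ⟨hq, fun a ha => ?_⟩
  rw [← hW (mem_support_iff.1 ha), Finsupp.weight_apply, Finsupp.sum_fintype _ _ (by simp)]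
  simp only [nsmul_eq_mul]

end MilnorRing

section MonomialCurve

variable {σ R M : Type*} [CommSemiring R] [AddCommMonoid M] {k : σ → ℕ} {t : σ → R}

/-- Restriction of polynomials to the parametrized monomial curve `xᵢ = tᵢ y ^ kᵢ`. -/
def monomialCurve (k : σ → ℕ) (t : σ → R) : MvPolynomial σ R →ₐ[R] Polynomial R :=
  aeval fun i => Polynomial.monomial (k i) (t i)

@[simp]
theorem monomialCurve_X (i : σ) : monomialCurve k t (X i) = Polynomial.monomial (k i) (t i) :=
  aeval_X _ i

theorem monomialCurve_monomial (a : σ →₀ ℕ) (r : R) :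
    monomialCurve k t (monomial a r) =
      Polynomial.monomial (Finsupp.weight k a) (r * a.prod fun i m => t i ^ m) := by
  rw [monomialCurve, aeval_monomial, Polynomial.algebraMap_eq, ← Polynomial.C_mul_monomial,
    Finsupp.weight_apply]
  congr 1
  induction a using Finsupp.induction_linear with
  | zero => simp
  | add f g hf hg =>
    rw [Finsupp.prod_add_index' (by simp) (by simp [pow_add]), hf, hg,
      Polynomial.monomial_mul_monomial, Finsupp.prod_add_index' (by simp) (by simp [pow_add]),
      Finsupp.sum_add_index' (by simp) (by simp [add_mul])]
  | single i m => simp [Polynomial.monomial_pow, mul_comm]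

theorem weight_eq_nsmul {q : σ → M} {w : M} (hq : ∀ i, q i = k i • w) (a : σ →₀ ℕ) :
    Finsupp.weight q a = Finsupp.weight k a • w := by
  simp only [Finsupp.weight_apply, hq, Finsupp.sum, Finset.sum_smul, smul_smul, smul_eq_mul]

theorem coeff_monomialCurve_eq_zero {q : σ → M} {w d : M} (hq : ∀ i, q i = k i • w)
    {p : MvPolynomial σ R} (hp : IsWeightedHomogeneous q p d) {m : ℕ} (hm : m • w ≠ d) :
    (monomialCurve k t p).coeff m = 0 := by
  rw [p.as_sum, map_sum, Polynomial.finsetSum_coeff]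
  refine Finset.sum_eq_zero fun a ha => ?_
  rw [monomialCurve_monomial, Polynomial.coeff_monomial, if_neg]
  rintro rfl
  exact hm (by rw [← weight_eq_nsmul hq, hp (mem_support_iff.1 ha)])

end MonomialCurve

/-- The Milnor ring of `W` is `ℂ[y]/(y ^ N)`, where `y` is the class of the variable `X j` and the
class of each `X i` is `tᵢ y ^ kᵢ`. The fields `mkQ_X` and `mkQ_X_pow` say that these relations
hold, `pow_dvd` that there are no others. -/
structure HasCurvePresentation {σ : Type*} (W : MvPolynomial σ ℂ) (k : σ → ℕ) (t : σ → ℂ) (j : σ)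
    (N : ℕ) : Prop where
  exponent_eq_one : k j = 1
  coeff_eq_one : t j = 1
  mkQ_X : ∀ i, mkQ W (X i) = t i • mkQ W (X j) ^ k i
  mkQ_X_pow : mkQ W (X j) ^ N = 0
  pow_dvd : ∀ i, Polynomial.X ^ N ∣ monomialCurve k t (pderiv i W)

namespace HasCurvePresentation

section Single

variable {σ : Type*} {W : MvPolynomial σ ℂ} {k : σ → ℕ} {t : σ → ℂ} {j : σ} {N : ℕ}

theorem monomialCurve_X_self (h : HasCurvePresentation W k t j N) :
    monomialCurve k t (X j) = Polynomial.X := by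
  rw [monomialCurve_X, h.exponent_eq_one, h.coeff_eq_one, Polynomial.monomial_one_one_eq_X]

theorem mkQ_eq_aeval (h : HasCurvePresentation W k t j N) (p : MvPolynomial σ ℂ) :
    mkQ W p = Polynomial.aeval (mkQ W (X j)) (monomialCurve k t p) := by
  suffices mkQ W = (Polynomial.aeval (mkQ W (X j))).comp (monomialCurve k t) from
    DFunLike.congr_fun this p
  refine MvPolynomial.algHom_ext fun i => ?_
  rw [AlgHom.comp_apply, monomialCurve_X, Polynomial.aeval_monomial, ← Algebra.smul_def]
  exact h.mkQ_X i

theorem mkQ_eq_zero_iff_dvd (h : HasCurvePresentation W k t j N) {p : MvPolynomial σ ℂ} :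
    mkQ W p = 0 ↔ Polynomial.X ^ N ∣ monomialCurve k t p := by
  constructor
  · have jacobianIdeal_le : jacobianIdeal W ≤
        (Ideal.span {(Polynomial.X : Polynomial ℂ) ^ N}).comap (monomialCurve k t) := by
      refine Ideal.span_le.2 ?_
      rintro _ ⟨i, rfl⟩
      exact Ideal.mem_span_singleton.2 (h.pow_dvd i)
    exact fun hp => Ideal.mem_span_singleton.1 (jacobianIdeal_le (mkQ_eq_zero_iff.1 hp))
  · rintro ⟨g, hg⟩
    rw [h.mkQ_eq_aeval, hg, map_mul, map_pow, Polynomial.aeval_X, h.mkQ_X_pow, zero_mul]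

theorem linearIndependent_pow (h : HasCurvePresentation W k t j N) :
    LinearIndependent ℂ fun m : Fin N => mkQ W (X j ^ (m : ℕ)) := by
  rw [Fintype.linearIndependent_iff]
  intro g hg m
  have mkQ_sum : mkQ W (∑ l : Fin N, g l • X j ^ (l : ℕ)) = 0 := by
    simpa only [map_sum, map_smul] using hg
  have coeff_eq_zero := Polynomial.X_pow_dvd_iff.1 (h.mkQ_eq_zero_iff_dvd.1 mkQ_sum) m m.2
  simpa [h.monomialCurve_X_self, -monomialCurve_X, Polynomial.coeff_X_pow, Fin.val_inj]
    using coeff_eq_zero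

theorem span_pow_eq_top (h : HasCurvePresentation W k t j N) :
    Submodule.span ℂ (Set.range fun m : Fin N => mkQ W (X j ^ (m : ℕ))) = ⊤ := by
  refine eq_top_iff.2 fun a _ => ?_
  obtain ⟨p, rfl⟩ := mkQ_surjective W a
  rw [h.mkQ_eq_aeval, Polynomial.aeval_eq_sum_range]
  refine Submodule.sum_mem _ fun m _ => Submodule.smul_mem _ _ ?_
  rcases lt_or_ge m N with hm | hm
  · exact Submodule.subset_span ⟨⟨m, hm⟩, map_pow _ _ _⟩
  · rw [pow_eq_zero_of_le hm h.mkQ_X_pow]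
    exact Submodule.zero_mem _

theorem finrank_milnorRing (h : HasCurvePresentation W k t j N) :
    Module.finrank ℂ (MilnorRing W) = N := by
  rw [Module.finrank_eq_card_basis (.mk h.linearIndependent_pow h.span_pow_eq_top.ge),
    Fintype.card_fin]

/-- The algebra homomorphism out of `Q_W = ℂ[y]/(y ^ N)` sending `y` to a given `b` with
`b ^ N = 0`. -/
def lift (h : HasCurvePresentation W k t j N) {B : Type*} [CommRing B] [Algebra ℂ B] (b : B)
    (hb : b ^ N = 0) : MilnorRing W →ₐ[ℂ] B :=
  Ideal.Quotient.liftₐ (jacobianIdeal W) ((Polynomial.aeval b).comp (monomialCurve k t))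
    fun p hp => by
      obtain ⟨g, hg⟩ := h.mkQ_eq_zero_iff_dvd.1 (mkQ_eq_zero_iff.2 hp)
      simp [hg, hb]

theorem lift_mkQ (h : HasCurvePresentation W k t j N) {B : Type*} [CommRing B] [Algebra ℂ B]
    (b : B) (hb : b ^ N = 0) (p : MvPolynomial σ ℂ) :
    h.lift b hb (mkQ W p) = Polynomial.aeval b (monomialCurve k t p) :=
  rfl

theorem lift_mkQ_X (h : HasCurvePresentation W k t j N) {B : Type*} [CommRing B] [Algebra ℂ B]
    (b : B) (hb : b ^ N = 0) : h.lift b hb (mkQ W (X j)) = b := by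
  rw [lift_mkQ, h.monomialCurve_X_self, Polynomial.aeval_X]

theorem algHom_ext (h : HasCurvePresentation W k t j N) {B : Type*} [CommRing B] [Algebra ℂ B]
    {f g : MilnorRing W →ₐ[ℂ] B} (hfg : f (mkQ W (X j)) = g (mkQ W (X j))) : f = g := by
  refine AlgHom.ext fun a => ?_
  obtain ⟨p, rfl⟩ := mkQ_surjective W a
  rw [h.mkQ_eq_aeval, ← Polynomial.aeval_algHom_apply, hfg, Polynomial.aeval_algHom_apply]

/-- The coefficient of `y ^ m` as a linear functional on `Q_W = ℂ[y]/(y ^ N)`, for `m < N`. -/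
def coeffFunctional (h : HasCurvePresentation W k t j N) {m : ℕ} (hm : m < N) :
    MilnorRing W →ₗ[ℂ] ℂ :=
  Submodule.liftQ ((jacobianIdeal W).restrictScalars ℂ)
    (Polynomial.lcoeff ℂ m ∘ₗ (monomialCurve k t).toLinearMap) fun _ hp =>
      Polynomial.X_pow_dvd_iff.1 (h.mkQ_eq_zero_iff_dvd.1 (mkQ_eq_zero_iff.2 hp)) m hm

theorem coeffFunctional_mkQ (h : HasCurvePresentation W k t j N) {m : ℕ} (hm : m < N)
    (p : MvPolynomial σ ℂ) :
    h.coeffFunctional hm (mkQ W p) = (monomialCurve k t p).coeff m :=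
  rfl

theorem mkQ_X_pow_mem_gradedPiece (h : HasCurvePresentation W k t j N) {q : σ → ℚ} {w : ℚ}
    (hq : ∀ i, q i = k i • w) (m : ℕ) : mkQ W (X j) ^ m ∈ gradedPiece W q (m • w) := by
  have hXj : IsWeightedHomogeneous q (X j ^ m : MvPolynomial σ ℂ) (m • w) := by
    simpa only [hq, h.exponent_eq_one, one_smul] using (isWeightedHomogeneous_X ℂ q j).pow m
  exact ⟨X j ^ m, hXj, map_pow (mkQ W) _ _⟩

variable [Fintype σ]

theorem belowTop_le_ker_coeffFunctional (h : HasCurvePresentation W k t j N) {m : ℕ} (hm : m < N)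
    {q : σ → ℚ} {w : ℚ} (hq : ∀ i, q i = k i • w) (hm_top : topDegree q = m • w) :
    belowTop W q ≤ LinearMap.ker (h.coeffFunctional hm) := by
  refine iSup₂_le fun d hd => ?_
  rintro _ ⟨p, hp, rfl⟩
  exact coeff_monomialCurve_eq_zero hq hp (hm_top ▸ hd.ne')

theorem coeffFunctional_mul_eq [DecidableEq σ] (h : HasCurvePresentation W k t j N) {m : ℕ}
    (hm : m < N) {q : σ → ℚ} {w : ℚ} (hq : ∀ i, q i = k i • w) (hm_top : topDegree q = m • w)
    {pairing : MilnorRing W → MilnorRing W → ℂ} (hpairing : IsMilnorPairing W q pairing)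
    (a b : MilnorRing W) :
    h.coeffFunctional hm (a * b) =
      pairing a b / N * h.coeffFunctional hm (mkQ W (hess W)) := by
  have hker := h.belowTop_le_ker_coeffFunctional hm hq hm_top (hpairing a b)
  rwa [LinearMap.mem_ker, map_sub, map_smul, sub_eq_zero, h.finrank_milnorRing, smul_eq_mul]
    at hker

end Single

section Scale

variable {σ τ : Type*} {W : MvPolynomial σ ℂ} {V : MvPolynomial τ ℂ} {k : σ → ℕ} {k' : τ → ℕ}
  {t : σ → ℂ} {t' : τ → ℂ} {i : σ} {j : τ} {N : ℕ}

/-- The isomorphism `Q_W ≃ Q_V` sending `y` to `c y`, for two Milnor rings presented as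
`ℂ[y]/(y ^ N)`. -/
def scaleEquiv (hW : HasCurvePresentation W k t i N) (hV : HasCurvePresentation V k' t' j N)
    {c : ℂ} (hc : c ≠ 0) : MilnorRing W ≃ₐ[ℂ] MilnorRing V :=
  AlgEquiv.ofAlgHom
    (hW.lift (c • mkQ V (X j)) (by rw [smul_pow, hV.mkQ_X_pow, smul_zero]))
    (hV.lift (c⁻¹ • mkQ W (X i)) (by rw [smul_pow, hW.mkQ_X_pow, smul_zero]))
    (hV.algHom_ext <| by
      rw [AlgHom.comp_apply, lift_mkQ_X, map_smul, lift_mkQ_X, inv_smul_smul₀ hc, AlgHom.id_apply])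
    (hW.algHom_ext <| by
      rw [AlgHom.comp_apply, lift_mkQ_X, map_smul, lift_mkQ_X, smul_inv_smul₀ hc, AlgHom.id_apply])

variable (hW : HasCurvePresentation W k t i N) (hV : HasCurvePresentation V k' t' j N)
  {c : ℂ} (hc : c ≠ 0)

theorem scaleEquiv_mkQ (p : MvPolynomial σ ℂ) :
    hW.scaleEquiv hV hc (mkQ W p) = Polynomial.aeval (c • mkQ V (X j)) (monomialCurve k t p) :=
  rfl

theorem scaleEquiv_mkQ_X (l : σ) :
    hW.scaleEquiv hV hc (mkQ W (X l)) = t l • (c • mkQ V (X j)) ^ k l := by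
  rw [scaleEquiv_mkQ, monomialCurve_X, Polynomial.aeval_monomial, ← Algebra.smul_def]

theorem scaleEquiv_mkQ_X_self :
    hW.scaleEquiv hV hc (mkQ W (X i)) = c • mkQ V (X j) := by
  rw [scaleEquiv_mkQ_X, hW.exponent_eq_one, hW.coeff_eq_one, one_smul, pow_one]

theorem coeffFunctional_scaleEquiv {m : ℕ} (hm : m < N) (a : MilnorRing W) :
    hV.coeffFunctional hm (hW.scaleEquiv hV hc a) = c ^ m * hW.coeffFunctional hm a := by
  obtain ⟨p, rfl⟩ := mkQ_surjective W a
  have scaleEquiv_eq : hW.scaleEquiv hV hc (mkQ W p) =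
      mkQ V (Polynomial.aeval (c • X j) (monomialCurve k t p)) := by
    rw [scaleEquiv_mkQ, ← Polynomial.aeval_algHom_apply, map_smul]
  rw [scaleEquiv_eq, coeffFunctional_mkQ, coeffFunctional_mkQ, ← Polynomial.aeval_algHom_apply,
    map_smul, hV.monomialCurve_X_self, Polynomial.smul_eq_C_mul, ← Polynomial.comp_eq_aeval,
    Polynomial.comp_C_mul_X_coeff, mul_comm]

variable [Fintype σ] [DecidableEq σ] [Fintype τ] [DecidableEq τ] {q : σ → ℚ} {q' : τ → ℚ} {w : ℚ}

theorem preservesGrading_scaleEquiv (hq : ∀ l, q l = k l • w) (hq' : ∀ l, q' l = k' l • w) :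
    PreservesGrading (hW.scaleEquiv hV hc) q q' := by
  rintro d _ ⟨p, hp, rfl⟩
  change hW.scaleEquiv hV hc (mkQ W p) ∈ _
  rw [scaleEquiv_mkQ, Polynomial.aeval_eq_sum_range]
  refine Submodule.sum_mem _ fun m _ => ?_
  by_cases hm : m • w = d
  · rw [smul_pow, ← hm]
    exact Submodule.smul_mem _ _ (Submodule.smul_mem _ _ (hV.mkQ_X_pow_mem_gradedPiece hq' m))
  · rw [coeff_monomialCurve_eq_zero hq hp hm, zero_smul]
    exact Submodule.zero_mem _

theorem preservesPairings_scaleEquiv (hq : ∀ l, q l = k l • w) (hq' : ∀ l, q' l = k' l • w)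
    {m : ℕ} (hm : m < N) (hm_top : topDegree q = m • w) (hm_top' : topDegree q' = m • w)
    (hhess : hV.coeffFunctional hm (mkQ V (hess V)) ≠ 0)
    (hc_hess : c ^ m * hW.coeffFunctional hm (mkQ W (hess W)) =
      hV.coeffFunctional hm (mkQ V (hess V))) :
    PreservesPairings (hW.scaleEquiv hV hc) q q' := by
  intro pW pV hpW hpV a b
  have hN : (N : ℂ) ≠ 0 := Nat.cast_ne_zero.2 (by lia)
  set φ := hW.scaleEquiv hV hc
  have key : pV (φ a) (φ b) / N * hV.coeffFunctional hm (mkQ V (hess V)) =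
      pW a b / N * hV.coeffFunctional hm (mkQ V (hess V)) := by
    calc pV (φ a) (φ b) / N * hV.coeffFunctional hm (mkQ V (hess V))
        = hV.coeffFunctional hm (φ (a * b)) := by
          rw [map_mul, hV.coeffFunctional_mul_eq hm hq' hm_top' hpV]
      _ = c ^ m * hW.coeffFunctional hm (a * b) := coeffFunctional_scaleEquiv hW hV hc hm _
      _ = c ^ m * (pW a b / N * hW.coeffFunctional hm (mkQ W (hess W))) := by
          rw [hW.coeffFunctional_mul_eq hm hq hm_top hpW]
      _ = pW a b / N * hV.coeffFunctional hm (mkQ V (hess V)) := by rw [← hc_hess]; ring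
  exact ((div_left_inj' hN).1 (mul_right_cancel₀ hhess key)).symm

end Scale

end HasCurvePresentation

end LG

section Weights

variable {n : ℕ}

theorem q7_zero (n : ℕ) : q7 n 0 = 1 / 2 :=
  rfl

theorem q7_one (n : ℕ) : q7 n 1 = 1 / (2 * n) :=
  rfl

theorem q7_eq_nsmul (hn : n ≠ 0) (i : Fin 2) : q7 n i = ![n, 1] i • (1 / (2 * n) : ℚ) := by
  revert i
  rw [Fin.forall_fin_two, q7_zero, q7_one, Matrix.cons_val_zero, Matrix.cons_val_one, nsmul_eq_mul]
  exact ⟨by field_simp, (one_nsmul _).symm⟩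

theorem q7_pos (hn : n ≠ 0) (i : Fin 2) : 0 < q7 n i := by
  revert i
  rw [Fin.forall_fin_two, q7_zero, q7_one]
  exact ⟨by positivity, by positivity⟩

theorem topDegree_q7 (hn : n ≠ 0) : topDegree (q7 n) = (2 * n - 2) • (1 / (2 * n) : ℚ) := by
  rw [topDegree, Fin.sum_univ_two, q7_zero, q7_one, nsmul_eq_mul]
  push_cast [show 2 ≤ 2 * n by lia]
  field_simp
  ring

theorem isWeightedHomogeneous_X_zero_sq (n : ℕ) :
    IsWeightedHomogeneous (q7 n) (X 0 ^ 2 : MvPolynomial (Fin 2) ℂ) 1 := by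
  have weight_eq : 2 • q7 n 0 = 1 := by rw [q7_zero]; norm_num
  exact weight_eq ▸ (isWeightedHomogeneous_X ℂ (q7 n) 0).pow 2

theorem isQuasiHomogeneous_W7 (hn : n ≠ 0) : IsQuasiHomogeneous (W7 n) (q7 n) := by
  have weight_eq : (2 * n) • q7 n 1 = 1 := by
    rw [q7_one, nsmul_eq_mul]
    push_cast
    field_simp
  exact isQuasiHomogeneous_of_isWeightedHomogeneous (q7_pos hn)
    ((isWeightedHomogeneous_X_zero_sq n).add
      (weight_eq ▸ (isWeightedHomogeneous_X ℂ (q7 n) 1).pow (2 * n)))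

theorem isQuasiHomogeneous_V7 (hn : n ≠ 0) : IsQuasiHomogeneous (V7 n) (q7 n) := by
  have weight_eq : q7 n 0 + n • q7 n 1 = 1 := by
    rw [q7_zero, q7_one, nsmul_eq_mul]
    field_simp
    norm_num
  exact isQuasiHomogeneous_of_isWeightedHomogeneous (q7_pos hn)
    ((isWeightedHomogeneous_X_zero_sq n).add
      (weight_eq ▸ (isWeightedHomogeneous_X ℂ (q7 n) 0).mul
        ((isWeightedHomogeneous_X ℂ (q7 n) 1).pow n)))

end Weights

section Derivatives

variable (n : ℕ)

theorem pderiv_zero_W7 : pderiv 0 (W7 n) = (2 : ℂ) • X 0 := by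
  simp [W7, pderiv_X, smul_eq_C_mul, map_ofNat C]

theorem pderiv_one_W7 : pderiv 1 (W7 n) = (2 * n : ℂ) • X 1 ^ (2 * n - 1) := by
  simp [W7, pderiv_X, smul_eq_C_mul, map_ofNat C]

theorem pderiv_zero_V7 : pderiv 0 (V7 n) = (2 : ℂ) • X 0 + X 1 ^ n := by
  simp [V7, pderiv_X, smul_eq_C_mul, map_ofNat C]

theorem pderiv_one_V7 : pderiv 1 (V7 n) = (n : ℂ) • (X 0 * X 1 ^ (n - 1)) := by
  simp [V7, pderiv_X, smul_eq_C_mul, mul_left_comm]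

theorem hess_fin_two (P : MvPolynomial (Fin 2) ℂ) :
    hess P = pderiv 0 (pderiv 0 P) * pderiv 1 (pderiv 1 P) -
      pderiv 0 (pderiv 1 P) * pderiv 1 (pderiv 0 P) :=
  Matrix.det_fin_two _

theorem hess_W7 : hess (W7 n) = (2 * (2 * n * (2 * n - 1 : ℕ)) : ℂ) • X 1 ^ (2 * n - 2) := by
  have hxx : pderiv 0 (pderiv 0 (W7 n)) = C 2 := by
    simp [pderiv_zero_W7, smul_eq_C_mul]
  have hyy : pderiv 1 (pderiv 1 (W7 n)) =
      C (2 * n * (2 * n - 1 : ℕ) : ℂ) * X 1 ^ (2 * n - 2) := by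
    simp [pderiv_one_W7, smul_eq_C_mul, Nat.sub_sub, mul_assoc]
  have hxy : pderiv 0 (pderiv 1 (W7 n)) = 0 := by
    simp [pderiv_one_W7, pderiv_X, smul_eq_C_mul]
  rw [hess_fin_two, hxx, hyy, hxy, zero_mul, sub_zero, ← mul_assoc, ← C_mul, smul_eq_C_mul]

theorem hess_V7 : hess (V7 n) = (2 * (n * (n - 1 : ℕ)) : ℂ) • (X 0 * X 1 ^ (n - 2)) -
    (n ^ 2 : ℂ) • X 1 ^ (2 * n - 2) := by
  have hxx : pderiv 0 (pderiv 0 (V7 n)) = C 2 := by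
    simp [pderiv_zero_V7, pderiv_X, smul_eq_C_mul]
  have hyy : pderiv 1 (pderiv 1 (V7 n)) = C (n * (n - 1 : ℕ) : ℂ) * (X 0 * X 1 ^ (n - 2)) := by
    simp [pderiv_one_V7, pderiv_X, smul_eq_C_mul, Nat.sub_sub, mul_assoc, mul_left_comm]
  have hxy : pderiv 0 (pderiv 1 (V7 n)) = C (n : ℂ) * X 1 ^ (n - 1) := by
    simp [pderiv_one_V7, pderiv_X, smul_eq_C_mul]
  have hyx : pderiv 1 (pderiv 0 (V7 n)) = C (n : ℂ) * X 1 ^ (n - 1) := by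
    simp [pderiv_zero_V7, pderiv_X, smul_eq_C_mul]
  rw [hess_fin_two, hxx, hyy, hxy, hyx, show 2 * n - 2 = (n - 1) + (n - 1) by lia]
  simp only [smul_eq_C_mul, C_mul, C_pow]
  ring

end Derivatives

section CurvePresentations

variable {n : ℕ}

theorem monomialCurve_X_one_pow (n m : ℕ) (t : ℂ) :
    monomialCurve ![n, 1] ![t, 1] (X 1 ^ m) = Polynomial.monomial m 1 := by
  simp [Polynomial.monomial_pow]

theorem monomialCurve_X_zero_mul_X_one_pow (n m : ℕ) (t : ℂ) :
    monomialCurve ![n, 1] ![t, 1] (X 0 * X 1 ^ m) = Polynomial.monomial (n + m) t := by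
  rw [map_mul, monomialCurve_X_one_pow]
  simp [Polynomial.monomial_mul_monomial]

theorem hasCurvePresentation_W7 (hn : n ≠ 0) :
    HasCurvePresentation (W7 n) ![n, 1] ![0, 1] 1 (2 * n - 1) where
  exponent_eq_one := rfl
  coeff_eq_one := rfl
  mkQ_X := by
    have hx : (2 : ℂ) • mkQ (W7 n) (X 0) = 0 := by
      rw [← map_smul, ← pderiv_zero_W7, mkQ_pderiv]
    rw [Fin.forall_fin_two]
    simpa using hx
  mkQ_X_pow := by
    have hy : (2 * n : ℂ) • mkQ (W7 n) (X 1) ^ (2 * n - 1) = 0 := by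
      rw [← map_pow, ← map_smul, ← pderiv_one_W7, mkQ_pderiv]
    simpa [hn] using hy
  pow_dvd := by
    rw [Fin.forall_fin_two]
    constructor
    · simp [pderiv_zero_W7]
    · rw [pderiv_one_W7, map_smul, monomialCurve_X_one_pow, Polynomial.smul_monomial]
      exact X_pow_dvd_monomial _ _

theorem mkQ_V7_X_zero (n : ℕ) :
    mkQ (V7 n) (X 0) = (-1 / 2 : ℂ) • mkQ (V7 n) (X 1) ^ n := by
  have hx : (2 : ℂ) • mkQ (V7 n) (X 0) + mkQ (V7 n) (X 1) ^ n = 0 := by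
    rw [← map_pow, ← map_smul, ← map_add, ← pderiv_zero_V7, mkQ_pderiv]
  rw [← inv_smul_smul₀ (two_ne_zero' ℂ) (mkQ (V7 n) (X 0)), eq_neg_of_add_eq_zero_left hx,
    smul_neg, ← neg_smul]
  norm_num

theorem mkQ_V7_X_one_pow (hn : n ≠ 0) : mkQ (V7 n) (X 1) ^ (2 * n - 1) = 0 := by
  have hxy : (n : ℂ) • (mkQ (V7 n) (X 0) * mkQ (V7 n) (X 1) ^ (n - 1)) = 0 := by
    rw [← map_pow, ← map_mul, ← map_smul, ← pderiv_one_V7, mkQ_pderiv]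
  rw [mkQ_V7_X_zero, smul_mul_assoc, ← pow_add, show n + (n - 1) = 2 * n - 1 by lia] at hxy
  simpa [hn] using hxy

theorem hasCurvePresentation_V7 (hn : n ≠ 0) :
    HasCurvePresentation (V7 n) ![n, 1] ![-1 / 2, 1] 1 (2 * n - 1) where
  exponent_eq_one := rfl
  coeff_eq_one := rfl
  mkQ_X := by
    rw [Fin.forall_fin_two]
    simpa using mkQ_V7_X_zero n
  mkQ_X_pow := mkQ_V7_X_one_pow hn
  pow_dvd := by
    rw [Fin.forall_fin_two]
    constructor
    · suffices monomialCurve ![n, 1] ![-1 / 2, 1] (pderiv 0 (V7 n)) = 0 from this ▸ dvd_zero _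
      rw [pderiv_zero_V7, map_add, map_smul, monomialCurve_X_one_pow, monomialCurve_X,
        Polynomial.smul_monomial]
      norm_num [← map_add]
    · rw [pderiv_one_V7, map_smul, monomialCurve_X_zero_mul_X_one_pow, Polynomial.smul_monomial,
        show n + (n - 1) = 2 * n - 1 by lia]
      exact X_pow_dvd_monomial _ _

theorem monomialCurve_hess_W7 (n : ℕ) :
    monomialCurve ![n, 1] ![0, 1] (hess (W7 n)) =
      Polynomial.monomial (2 * n - 2) (2 * (2 * n * (2 * n - 1 : ℕ)) : ℂ) := by
  rw [hess_W7, map_smul, monomialCurve_X_one_pow, Polynomial.smul_monomial, smul_eq_mul, mul_one]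

theorem monomialCurve_hess_V7 (hn : 2 ≤ n) :
    monomialCurve ![n, 1] ![-1 / 2, 1] (hess (V7 n)) =
      Polynomial.monomial (2 * n - 2) (-(n * (2 * n - 1 : ℕ)) : ℂ) := by
  rw [hess_V7, map_sub, map_smul, map_smul, monomialCurve_X_one_pow,
    monomialCurve_X_zero_mul_X_one_pow, show n + (n - 2) = 2 * n - 2 by lia,
    Polynomial.smul_monomial, Polynomial.smul_monomial, ← map_sub, smul_eq_mul, smul_eq_mul]
  congr 1
  push_cast [show 1 ≤ 2 * n by lia, show 1 ≤ n by lia]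
  ring

theorem preservesPairings_scaleEquiv_W7_V7 (hn : 2 ≤ n) {c : ℂ} (hc : c ≠ 0)
    (hc_pow : c ^ (2 * n - 2) = -1 / 4) :
    PreservesPairings
      ((hasCurvePresentation_W7 (n := n) (by lia)).scaleEquiv (hasCurvePresentation_V7 (by lia)) hc)
      (q7 n) (q7 n) := by
  have hn0 : n ≠ 0 := by lia
  have hμ : 2 * n - 1 ≠ 0 := by lia
  refine HasCurvePresentation.preservesPairings_scaleEquiv _ _ hc (q7_eq_nsmul hn0)
    (q7_eq_nsmul hn0) (m := 2 * n - 2) (by lia) (topDegree_q7 hn0) (topDegree_q7 hn0) ?_ ?_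
  · rw [HasCurvePresentation.coeffFunctional_mkQ, monomialCurve_hess_V7 hn,
      Polynomial.coeff_monomial_same, neg_ne_zero]
    exact_mod_cast mul_ne_zero hn0 hμ
  · rw [HasCurvePresentation.coeffFunctional_mkQ, HasCurvePresentation.coeffFunctional_mkQ,
      monomialCurve_hess_V7 hn, monomialCurve_hess_W7, Polynomial.coeff_monomial_same,
      Polynomial.coeff_monomial_same, hc_pow]
    ring

end CurvePresentations

set_option maxHeartbeats 1000000 in
/-- for `W = x² + y^{2n}` and `V = x² + xyⁿ` (`n ≥ 2`), both with
weights `(1/2, 1/(2n))` and monomial basis `{1, y, …, y^{2n-2}}` of the Milnor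
ring, each nonzero `c ∈ ℂ` yields a graded algebra isomorphism
`φ_c : Q_W ≃ Q_V` with `x ↦ 0`, `y ↦ c·[y]`, and for some nonzero `c` the
isomorphism `φ_c` also preserves the pairings. -/
theorem example_fermat_chain (n : ℕ) (hn : 2 ≤ n) :
    IsQuasiHomogeneous (W7 n) (q7 n) ∧ IsQuasiHomogeneous (V7 n) (q7 n) ∧
    (LinearIndependent ℂ (fun j : Fin (2 * n - 1) => mkQ (W7 n) (X 1 ^ (j : ℕ))) ∧
      Submodule.span ℂ
        (Set.range fun j : Fin (2 * n - 1) => mkQ (W7 n) (X 1 ^ (j : ℕ))) = ⊤) ∧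
    (LinearIndependent ℂ (fun j : Fin (2 * n - 1) => mkQ (V7 n) (X 1 ^ (j : ℕ))) ∧
      Submodule.span ℂ
        (Set.range fun j : Fin (2 * n - 1) => mkQ (V7 n) (X 1 ^ (j : ℕ))) = ⊤) ∧
    (∀ c : ℂ, c ≠ 0 → ∃ φ : MilnorRing (W7 n) ≃ₐ[ℂ] MilnorRing (V7 n),
      φ (mkQ (W7 n) (X 0)) = 0 ∧ φ (mkQ (W7 n) (X 1)) = c • mkQ (V7 n) (X 1) ∧
      PreservesGrading ⇑φ (q7 n) (q7 n)) ∧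
    (∃ c : ℂ, c ≠ 0 ∧ ∃ φ : MilnorRing (W7 n) ≃ₐ[ℂ] MilnorRing (V7 n),
      φ (mkQ (W7 n) (X 0)) = 0 ∧ φ (mkQ (W7 n) (X 1)) = c • mkQ (V7 n) (X 1) ∧
      PreservesGrading ⇑φ (q7 n) (q7 n) ∧ PreservesPairings ⇑φ (q7 n) (q7 n)) := by
  have hn0 : n ≠ 0 := by lia
  have hW := hasCurvePresentation_W7 hn0
  have hV := hasCurvePresentation_V7 hn0
  have map_X_zero {c : ℂ} (hc : c ≠ 0) : hW.scaleEquiv hV hc (mkQ (W7 n) (X 0)) = 0 := by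
    rw [hW.scaleEquiv_mkQ_X hV hc 0, Matrix.cons_val_zero, zero_smul]
  have graded {c : ℂ} (hc : c ≠ 0) : PreservesGrading (hW.scaleEquiv hV hc) (q7 n) (q7 n) :=
    hW.preservesGrading_scaleEquiv hV hc (q7_eq_nsmul hn0) (q7_eq_nsmul hn0)
  obtain ⟨c, hc, hc_pow⟩ := exists_ne_zero_pow_eq (m := 2 * n - 2) (z := (-1 / 4 : ℂ)) (by lia)
    (by norm_num)
  exact ⟨isQuasiHomogeneous_W7 hn0, isQuasiHomogeneous_V7 hn0,
    ⟨hW.linearIndependent_pow, hW.span_pow_eq_top⟩, ⟨hV.linearIndependent_pow, hV.span_pow_eq_top⟩,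
    fun c hc => ⟨hW.scaleEquiv hV hc, map_X_zero hc, hW.scaleEquiv_mkQ_X_self hV hc, graded hc⟩,
    c, hc, hW.scaleEquiv hV hc, map_X_zero hc, hW.scaleEquiv_mkQ_X_self hV hc, graded hc,
    preservesPairings_scaleEquiv_W7_V7 hn hc hc_pow⟩
end
end

section
/- Let W ∈ ℂ[x₁,…,xₙ] be nondegenerate and quasihomogeneous with weights (q₁,…,qₙ), where each qᵢ is a rational number with 0 < qᵢ < 1. Then the dimension of the Milnor ring as a ℂ-vector space is dim_ℂ Q_W = ∏_{i=1}^{n} (1/qᵢ − 1). -/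
open MvPolynomial
open scoped TensorProduct

noncomputable section

open LG

/-!
By the Nullstellensatz, nondegeneracy says that the radical of the Jacobian ideal contains every
variable. In the localization at the origin the variables form a regular sequence, and an exchange
argument transfers this to the `n` partial derivatives `∂W/∂xᵢ`; since these are homogeneous, they
already form a regular sequence in the polynomial ring. After clearing denominators, give `xᵢ` the
weight `wᵢ = N qᵢ`, so that `∂W/∂xᵢ` has degree `dᵢ = N (1 - qᵢ)`. Dividing out a nonzerodivisor of
degree `d` multiplies the Hilbert series by `1 - tᵈ`; applied to the variables and to the partial
derivatives this gives the Hilbert series `∏ (1 - t ^ dᵢ) / (1 - t ^ wᵢ)` of the Milnor ring. It is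
a polynomial, and its value at `t = 1` is `∏ dᵢ / wᵢ`.
-/

namespace LG

section RegularSequence

open RingTheory.Sequence IsLocalRing

variable {R M : Type*} [CommRing R] [AddCommGroup M] [Module R M]

/- Only the maximal members of `S` matter; `a` is chosen inside those that miss `f` and outside
those that contain `f`. -/
lemma exists_mem_forall_add_notMem (f : R) (J : Ideal R) {S : Set (Ideal R)} (hS : S.Finite)
    (hprime : ∀ P ∈ S, P.IsPrime) (h : ∀ P ∈ S, f ∈ P → ¬ J ≤ P) :
    ∃ a ∈ J, ∀ P ∈ S, f + a ∉ P := by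
  classical
  have hfin : {P | Maximal (· ∈ S) P}.Finite := hS.subset fun P hP => hP.prop
  obtain ⟨containing, hcontaining⟩ : ∃ T : Finset (Ideal R),
      ∀ P, P ∈ T ↔ Maximal (· ∈ S) P ∧ f ∈ P := ⟨{P ∈ hfin.toFinset | f ∈ P}, by simp⟩
  obtain ⟨missing, hmissing⟩ : ∃ T : Finset (Ideal R),
      ∀ P, P ∈ T ↔ Maximal (· ∈ S) P ∧ f ∉ P := ⟨{P ∈ hfin.toFinset | f ∉ P}, by simp⟩
  have hnot : ¬ ((J ⊓ missing.inf id : Ideal R) : Set R) ⊆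
      ⋃ P ∈ (containing : Set (Ideal R)), P := by
    rw [Ideal.subset_union_prime ⊤ ⊤ fun P hP _ _ => hprime P ((hcontaining P).1 hP).1.prop]
    rintro ⟨P, hP, hle⟩
    obtain ⟨hPmax, hfP⟩ := (hcontaining P).1 hP
    have hPprime := hprime P hPmax.prop
    rcases hPprime.inf_le.1 hle with hJ | hinf
    · exact h P hPmax.prop hfP hJ
    · obtain ⟨Q, hQ, hQP⟩ := hPprime.inf_le'.1 hinf
      obtain ⟨hQmax, hfQ⟩ := (hmissing Q).1 hQ
      exact hfQ (hQmax.le_of_ge hPmax.prop hQP hfP)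
  obtain ⟨a, ⟨haJ, hamissing⟩, hacontaining⟩ := Set.not_subset.1 hnot
  refine ⟨a, haJ, fun P hP hfa => ?_⟩
  obtain ⟨Q, hPQ, hQ⟩ := hS.exists_le_maximal hP
  by_cases hfQ : f ∈ Q
  · have haQ : a ∈ Q := (Ideal.add_mem_iff_right Q hfQ).1 (hPQ hfa)
    exact hacontaining (Set.mem_biUnion ((hcontaining Q).2 ⟨hQ, hfQ⟩) haQ)
  · have hle : missing.inf id ≤ Q := Finset.inf_le (f := id) ((hmissing Q).2 ⟨hQ, hfQ⟩)
    exact hfQ ((Ideal.add_mem_iff_left Q (hle hamissing)).1 (hPQ hfa))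

lemma isSMulRegular_iff_forall_notMem_associatedPrimes [IsNoetherianRing R] {r : R} :
    IsSMulRegular M r ↔ ∀ P ∈ associatedPrimes R M, r ∉ P := by
  have h := congrArg (r ∈ ·) (biUnion_associatedPrimes_eq_compl_regular R (M := M))
  simpa using (not_congr h.to_iff).symm

lemma exists_mem_isSMulRegular_add [IsNoetherianRing R] [Module.Finite R M] {x f : R}
    {J : Ideal R} (hx : IsSMulRegular M x)
    (hrad : x ∈ (Ideal.span {f} ⊔ J ⊔ Module.annihilator R M).radical) :
    ∃ a ∈ J, IsSMulRegular M (f + a) := by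
  simp only [isSMulRegular_iff_forall_notMem_associatedPrimes] at hx ⊢
  refine exists_mem_forall_add_notMem f J (associatedPrimes.finite R M)
    (fun P hP => hP.isPrime) fun P hP hfP hJP => hx P hP ?_
  have hann : Module.annihilator R M ≤ P := by
    simpa only [Submodule.annihilator_top] using IsAssociatedPrime.annihilator_le hP
  have hle := sup_le (sup_le ((Ideal.span_singleton_le_iff_mem P).2 hfP) hJP) hann
  exact hP.isPrime.radical_le_iff.2 hle hrad

lemma isSMulRegular_quotient_add_iff {J : Ideal R} (f : R) {a : R} (ha : a ∈ J) :
    IsSMulRegular (M ⧸ (J • ⊤ : Submodule R M)) (f + a) ↔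
      IsSMulRegular (M ⧸ (J • ⊤ : Submodule R M)) f := by
  simp only [isSMulRegular_quotient_iff_mem_of_smul_mem, add_smul]
  refine forall_congr' fun m => imp_congr_left ?_
  exact Submodule.add_mem_iff_left _ (Submodule.smul_mem_smul ha trivial)

lemma mem_annihilator_quotSMulTop (r : R) : r ∈ Module.annihilator R (QuotSMulTop r M) := by
  refine Module.mem_annihilator.2 fun m => ?_
  obtain ⟨m, rfl⟩ := Submodule.Quotient.mk_surjective _ m
  rw [← Submodule.Quotient.mk_smul, Submodule.Quotient.mk_eq_zero]
  exact Submodule.smul_mem_pointwise_smul m r ⊤ trivial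

lemma annihilator_le_annihilator_quotient (N : Submodule R M) :
    Module.annihilator R M ≤ Module.annihilator R (M ⧸ N) :=
  LinearMap.annihilator_le_of_surjective N.mkQ N.mkQ_surjective

lemma ofList_cons_sup_annihilator_le {f a : R} {fs : List R} (ha : a ∈ Ideal.ofList fs) :
    Ideal.ofList (f :: fs) ⊔ Module.annihilator R M ≤
      Ideal.ofList fs ⊔ Module.annihilator R (QuotSMulTop (f + a) M) := by
  rw [Ideal.ofList_cons]
  refine sup_le (sup_le ((Ideal.span_singleton_le_iff_mem _).2 ?_) le_sup_left)
    ((annihilator_le_annihilator_quotient _).trans le_sup_right)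
  have hsum := Submodule.add_mem_sup (neg_mem ha) (mem_annihilator_quotSMulTop (M := M) (f + a))
  rwa [neg_add_cancel_comm_assoc] at hsum

/- Exchange argument: modulo the first `n - 1` entries of `xs`, the head `f` of `fs` can be
corrected to a regular element `g ≡ f` modulo the tail of `fs`. Permuting, `g` may be moved to the
front; one then passes to `M ⧸ g M` and finally trades `g` back for `f`. -/
theorem isWeaklyRegular_of_mem_radical [IsLocalRing R] [IsNoetherianRing R] [Module.Finite R M]
    {xs fs : List R} (hlen : xs.length = fs.length) (hxs : ∀ x ∈ xs, x ∈ maximalIdeal R)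
    (hfs : ∀ f ∈ fs, f ∈ maximalIdeal R)
    (hrad : ∀ x ∈ xs, x ∈ (Ideal.ofList fs ⊔ Module.annihilator R M).radical)
    (hreg : IsWeaklyRegular M xs) : IsWeaklyRegular M fs := by
  induction fs generalizing xs M with
  | nil => exact .nil R M
  | cons f fs ih =>
    obtain ⟨xs, x, rfl⟩ := xs.eq_nil_or_concat'.resolve_left (by rintro rfl; simp at hlen)
    simp only [List.forall_mem_append, List.forall_mem_singleton, List.forall_mem_cons,
      List.length_append, List.length_cons, List.length_nil, add_left_inj, zero_add]
      at hlen hxs hfs hrad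
    rw [isWeaklyRegular_append_iff, isWeaklyRegular_singleton_iff] at hreg
    obtain ⟨a, ha, hg⟩ : ∃ a ∈ Ideal.ofList fs, IsSMulRegular
        (M ⧸ (Ideal.ofList xs • ⊤ : Submodule R M)) (f + a) := by
      refine exists_mem_isSMulRegular_add hreg.2 (Ideal.radical_mono ?_ hrad.2)
      rw [Ideal.ofList_cons]
      exact sup_le_sup_left (annihilator_le_annihilator_quotient _) _
    have hgmax : f + a ∈ maximalIdeal R :=
      add_mem hfs.1 ((Ideal.span_le.2 hfs.2 : Ideal.ofList fs ≤ _) ha)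
    have hgxs : IsWeaklyRegular M ((f + a) :: xs) :=
      isWeaklyRegular_of_perm_of_subset_maximalIdeal
        ((isWeaklyRegular_append_iff M xs [f + a]).2
          ⟨hreg.1, (isWeaklyRegular_singleton_iff _ _).2 hg⟩)
        (List.perm_append_singleton _ _)
        (by simpa only [List.forall_mem_append, List.forall_mem_singleton] using ⟨hxs.1, hgmax⟩)
    rw [isWeaklyRegular_cons_iff] at hgxs
    have hgfs : IsWeaklyRegular M ((f + a) :: fs) :=
      (isWeaklyRegular_cons_iff M _ _).2 ⟨hgxs.1, ih hlen hxs.1 hfs.2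
        (fun y hy => Ideal.radical_mono (ofList_cons_sup_annihilator_le ha) (hrad.1 y hy)) hgxs.2⟩
    have hfsg : IsWeaklyRegular M (fs ++ [f + a]) :=
      isWeaklyRegular_of_perm_of_subset_maximalIdeal hgfs
        (List.perm_append_singleton _ _).symm (List.forall_mem_cons.2 ⟨hgmax, hfs.2⟩)
    have hfsf : IsWeaklyRegular M (fs ++ [f]) := by
      rw [isWeaklyRegular_append_iff, isWeaklyRegular_singleton_iff] at hfsg ⊢
      exact ⟨hfsg.1, (isSMulRegular_quotient_add_iff f ha).1 hfsg.2⟩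
    exact isWeaklyRegular_of_perm_of_subset_maximalIdeal hfsf (List.perm_append_singleton _ _)
      (by simpa only [List.forall_mem_append, List.forall_mem_singleton] using ⟨hfs.2, hfs.1⟩)

lemma isWeaklyRegular_self_append_singleton_iff {rs : List R} {r : R} :
    IsWeaklyRegular R (rs ++ [r]) ↔
      IsWeaklyRegular R rs ∧ ∀ h, r * h ∈ Ideal.ofList rs → h ∈ Ideal.ofList rs := by
  rw [isWeaklyRegular_append_iff, isWeaklyRegular_singleton_iff,
    isSMulRegular_quotient_iff_mem_of_smul_mem]
  simp only [smul_eq_mul, Ideal.mul_top]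

lemma ofList_map_toList_univ {ι A : Type*} [Fintype ι] [CommRing A] (f : ι → A) :
    Ideal.ofList (Finset.univ.toList.map f) = Ideal.span (Set.range f) := by
  rw [Ideal.ofList]
  congr 1
  ext p
  simp

end RegularSequence

section GradedRegularSequence

open DirectSum RingTheory.Sequence

variable {R A : Type*} [CommRing R] [CommRing A] [Algebra R A] {𝒜 : ℕ → Submodule R A}
  [GradedAlgebra 𝒜] {I : Ideal A}

lemma isHomogeneous_ofList_map {ι : Type*} {f : ι → A} {d : ι → ℕ} (hf : ∀ i, f i ∈ 𝒜 (d i))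
    (l : List ι) : (Ideal.ofList (l.map f)).IsHomogeneous 𝒜 := by
  refine Ideal.homogeneous_span 𝒜 _ fun x hx => ?_
  obtain ⟨i, -, rfl⟩ := List.mem_map.1 hx
  exact ⟨d i, hf i⟩

lemma mem_of_mul_mem_of_isUnit_decompose_zero (hI : I.IsHomogeneous 𝒜) {s h : A} {j : ℕ}
    (hs : IsUnit (decompose 𝒜 s 0 : A)) (hh : h ∈ 𝒜 j) (hsh : s * h ∈ I) : h ∈ I := by
  have hcomp := hI (0 + j) hsh
  rw [coe_decompose_mul_add_of_right_mem 𝒜 hh] at hcomp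
  exact (Ideal.unit_mul_mem_iff_mem I hs).1 hcomp

lemma mem_of_mul_mem_of_exists_isUnit_decompose_zero (hI : I.IsHomogeneous 𝒜) {f : A} {d : ℕ}
    (hf : f ∈ 𝒜 d) (hloc : ∀ h, f * h ∈ I → ∃ s, IsUnit (decompose 𝒜 s 0 : A) ∧ s * h ∈ I)
    {h : A} (hfh : f * h ∈ I) : h ∈ I := by
  refine hI.mem_iff.2 fun j => ?_
  have hfhj : f * (decompose 𝒜 h j : A) ∈ I := by
    rw [← coe_decompose_mul_add_of_left_mem 𝒜 hf]
    exact hI _ hfh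
  obtain ⟨s, hs, hsh⟩ := hloc _ hfhj
  exact mem_of_mul_mem_of_isUnit_decompose_zero hI hs (SetLike.coe_mem _) hsh

lemma isWeaklyRegular_of_map_localization {S : Submonoid A}
    (hS : ∀ s ∈ S, IsUnit (decompose 𝒜 s 0 : A)) {ι : Type*} {f : ι → A} {d : ι → ℕ}
    (hf : ∀ i, f i ∈ 𝒜 (d i)) {l : List ι}
    (hreg : IsWeaklyRegular (Localization S) (l.map fun i => algebraMap A (Localization S) (f i))) :
    IsWeaklyRegular A (l.map f) := by
  induction l using List.reverseRecOn with
  | nil => exact .nil _ _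
  | append_singleton l i ih =>
    simp only [List.map_append, List.map_singleton, isWeaklyRegular_self_append_singleton_iff]
      at hreg ⊢
    have hmap : Ideal.ofList (l.map fun i => algebraMap A (Localization S) (f i)) =
        (Ideal.ofList (l.map f)).map (algebraMap A (Localization S)) := by
      rw [Ideal.map_ofList, List.map_map]
      rfl
    refine ⟨ih hreg.1, fun h => mem_of_mul_mem_of_exists_isUnit_decompose_zero
      (isHomogeneous_ofList_map hf l) (hf i) fun h hfh => ?_⟩
    have hloc : algebraMap A (Localization S) h ∈
        (Ideal.ofList (l.map f)).map (algebraMap A (Localization S)) := by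
      rw [← hmap]
      refine hreg.2 _ ?_
      rw [hmap, ← map_mul]
      exact Ideal.mem_map_of_mem _ hfh
    obtain ⟨s, hs, hsh⟩ := (IsLocalization.algebraMap_mem_map_algebraMap_iff S _ _ _).1 hloc
    exact ⟨s, hS s hs, hsh⟩

end GradedRegularSequence

section HilbertSeries

open DirectSum

variable {K A : Type*} [Field K] [CommRing A] [Algebra K A] (𝒜 : ℕ → Submodule K A)

/-- The degree `m` part of an ideal of a graded algebra, as a subspace of the degree `m` part of
the algebra. -/
def degreePart (I : Ideal A) (m : ℕ) : Submodule K (𝒜 m) :=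
  (I.restrictScalars K).submoduleOf (𝒜 m)

/-- The Hilbert function of the quotient of a graded algebra by an ideal. The ideal is not bundled
as a homogeneous ideal; homogeneity is assumed where it is needed. -/
def hilbertFun (I : Ideal A) (m : ℕ) : ℕ :=
  Module.finrank K (𝒜 m ⧸ degreePart 𝒜 I m)

/-- The Hilbert series `∑ₘ dim (A ⧸ I)ₘ tᵐ`, with integer coefficients so that it can be multiplied
by factors `1 - tᵈ`. -/
def hilbertSeries (I : Ideal A) : PowerSeries ℤ :=
  PowerSeries.mk fun m => (hilbertFun 𝒜 I m : ℤ)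

lemma mem_degreePart {I : Ideal A} {m : ℕ} {x : 𝒜 m} : x ∈ degreePart 𝒜 I m ↔ (x : A) ∈ I :=
  Iff.rfl

lemma hilbertFun_eq_zero {I : Ideal A} {m : ℕ} (h : ∀ x ∈ 𝒜 m, x ∈ I) :
    hilbertFun 𝒜 I m = 0 := by
  have htop : degreePart 𝒜 I m = ⊤ := Submodule.submoduleOf_eq_top.2 h
  rw [hilbertFun, htop]
  exact Module.finrank_zero_of_subsingleton

variable [GradedAlgebra 𝒜] {𝒜} {I : Ideal A}

lemma degreePart_sup_span_singleton_of_lt (hI : I.IsHomogeneous 𝒜) {f : A} {d m : ℕ}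
    (hf : f ∈ 𝒜 d) (hm : m < d) :
    degreePart 𝒜 (I ⊔ Ideal.span {f}) m = degreePart 𝒜 I m := by
  ext x
  simp only [mem_degreePart]
  refine ⟨fun hx => ?_, fun hx => Ideal.mem_sup_left hx⟩
  obtain ⟨a, ha, _, hb, hac⟩ := Submodule.mem_sup.1 hx
  obtain ⟨c, rfl⟩ := Ideal.mem_span_singleton'.1 hb
  have hx_eq : (x : A) = decompose 𝒜 a m := by
    rw [← decompose_of_mem_same 𝒜 x.2, ← hac, decompose_add, DirectSum.add_apply, Submodule.coe_add,
      coe_decompose_mul_of_right_mem_of_not_le 𝒜 hf hm.not_ge, add_zero]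
  exact hx_eq ▸ hI m ha

/-- Multiplication by `f ∈ 𝒜 d`, as a map `𝒜 j → (A ⧸ I)_{j + d}`. -/
def mulToQuotient (I : Ideal A) {f : A} {d : ℕ} (hf : f ∈ 𝒜 d) (j : ℕ) :
    𝒜 j →ₗ[K] 𝒜 (j + d) ⧸ degreePart 𝒜 I (j + d) :=
  (degreePart 𝒜 I (j + d)).mkQ ∘ₗ
    (LinearMap.mulRight K f ∘ₗ (𝒜 j).subtype).codRestrict (𝒜 (j + d))
      fun a => SetLike.mul_mem_graded a.2 hf

lemma mulToQuotient_apply {f : A} {d j : ℕ} (hf : f ∈ 𝒜 d) (a : 𝒜 j) :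
    mulToQuotient I hf j a = Submodule.Quotient.mk ⟨a * f, SetLike.mul_mem_graded a.2 hf⟩ :=
  rfl

lemma ker_mulToQuotient {f : A} {d : ℕ} (hf : f ∈ 𝒜 d) (hreg : ∀ h, f * h ∈ I → h ∈ I) (j : ℕ) :
    LinearMap.ker (mulToQuotient I hf j) = degreePart 𝒜 I j := by
  ext a
  rw [LinearMap.mem_ker, mulToQuotient_apply, Submodule.Quotient.mk_eq_zero, mem_degreePart,
    mem_degreePart]
  exact ⟨fun h => hreg _ (mul_comm (a : A) f ▸ h), fun h => I.mul_mem_right f h⟩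

lemma range_mulToQuotient (hI : I.IsHomogeneous 𝒜) {f : A} {d : ℕ} (hf : f ∈ 𝒜 d) (j : ℕ) :
    LinearMap.range (mulToQuotient I hf j) =
      (degreePart 𝒜 (I ⊔ Ideal.span {f}) (j + d)).map (degreePart 𝒜 I (j + d)).mkQ := by
  apply le_antisymm
  · rintro _ ⟨a, rfl⟩
    exact ⟨_, Ideal.mem_sup_right
      (Ideal.mul_mem_left _ _ (Ideal.mem_span_singleton_self f)), rfl⟩
  · rintro _ ⟨x, hx, rfl⟩
    obtain ⟨a, ha, _, hb, hac⟩ := Submodule.mem_sup.1 hx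
    obtain ⟨c, rfl⟩ := Ideal.mem_span_singleton'.1 hb
    refine ⟨decompose 𝒜 c j, ?_⟩
    rw [mulToQuotient_apply, Submodule.mkQ_apply, eq_comm, Submodule.Quotient.eq, mem_degreePart]
    have hx_eq : (x : A) = decompose 𝒜 a (j + d) + decompose 𝒜 c j * f := by
      rw [← decompose_of_mem_same 𝒜 x.2, ← coe_decompose_mul_add_of_right_mem 𝒜 hf,
        ← Submodule.coe_add, ← DirectSum.add_apply, ← decompose_add, hac]
      rfl
    rw [Submodule.coe_sub, hx_eq, add_sub_cancel_right]
    exact hI _ ha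

lemma hilbertFun_sup_span_singleton_add [∀ m, Module.Finite K (𝒜 m)] (hI : I.IsHomogeneous 𝒜)
    {f : A} {d : ℕ} (hf : f ∈ 𝒜 d) (hreg : ∀ h, f * h ∈ I → h ∈ I) (j : ℕ) :
    hilbertFun 𝒜 (I ⊔ Ideal.span {f}) (j + d) + hilbertFun 𝒜 I j = hilbertFun 𝒜 I (j + d) := by
  have hle : degreePart 𝒜 I (j + d) ≤ degreePart 𝒜 (I ⊔ Ideal.span {f}) (j + d) :=
    fun x hx => Ideal.mem_sup_left hx
  have hrange := (mulToQuotient I hf j).quotKerEquivRange.finrank_eq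
  rw [ker_mulToQuotient hf hreg, range_mulToQuotient hI hf] at hrange
  have hquot := (Submodule.quotientQuotientEquivQuotient _ _ hle).finrank_eq
  unfold hilbertFun
  rw [← hquot, hrange]
  exact Submodule.finrank_quotient_add_finrank _

lemma hilbertSeries_sup_span_singleton [∀ m, Module.Finite K (𝒜 m)] (hI : I.IsHomogeneous 𝒜)
    {f : A} {d : ℕ} (hf : f ∈ 𝒜 d) (hreg : ∀ h, f * h ∈ I → h ∈ I) :
    hilbertSeries 𝒜 (I ⊔ Ideal.span {f}) = (1 - PowerSeries.X ^ d) * hilbertSeries 𝒜 I := by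
  ext m
  rw [sub_mul, one_mul, map_sub, PowerSeries.coeff_X_pow_mul']
  simp only [hilbertSeries, PowerSeries.coeff_mk]
  split_ifs with hdm
  · obtain ⟨j, rfl⟩ := Nat.exists_eq_add_of_le' hdm
    rw [← hilbertFun_sup_span_singleton_add hI hf hreg j, Nat.add_sub_cancel, Nat.cast_add,
      add_sub_cancel_right]
  · rw [hilbertFun, degreePart_sup_span_singleton_of_lt hI hf (not_le.1 hdm), sub_zero, hilbertFun]

lemma hilbertSeries_ofList_map [∀ m, Module.Finite K (𝒜 m)] {ι : Type*} {f : ι → A} {d : ι → ℕ}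
    (hf : ∀ i, f i ∈ 𝒜 (d i)) {l : List ι}
    (hreg : RingTheory.Sequence.IsWeaklyRegular A (l.map f)) :
    hilbertSeries 𝒜 (Ideal.ofList (l.map f)) =
      (l.map fun i => 1 - PowerSeries.X ^ d i).prod * hilbertSeries 𝒜 ⊥ := by
  induction l using List.reverseRecOn with
  | nil => simp
  | append_singleton l i ih =>
    rw [List.map_append, List.map_singleton, isWeaklyRegular_self_append_singleton_iff] at hreg
    rw [List.map_append, List.map_singleton, Ideal.ofList_append, Ideal.ofList_singleton,
      hilbertSeries_sup_span_singleton (isHomogeneous_ofList_map hf l) (hf i) hreg.2, ih hreg.1,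
      List.map_append, List.map_singleton, List.prod_append, List.prod_singleton]
    ring

lemma hilbertSeries_span_range [∀ m, Module.Finite K (𝒜 m)] {ι : Type*} [Fintype ι] {f : ι → A}
    {d : ι → ℕ} (hf : ∀ i, f i ∈ 𝒜 (d i))
    (hreg : RingTheory.Sequence.IsWeaklyRegular A (Finset.univ.toList.map f)) :
    hilbertSeries 𝒜 (Ideal.span (Set.range f)) =
      (∏ i, (1 - PowerSeries.X ^ d i)) * hilbertSeries 𝒜 ⊥ := by
  rw [← ofList_map_toList_univ, hilbertSeries_ofList_map hf hreg, Finset.prod_map_toList]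

lemma finrank_quotient_iInf_ker {ι V : Type*} [Fintype ι] [AddCommGroup V] [Module K V]
    {Q : ι → Type*} [∀ i, AddCommGroup (Q i)] [∀ i, Module K (Q i)] [∀ i, Module.Finite K (Q i)]
    {T : ∀ i, V →ₗ[K] Q i} (hT : Function.Surjective (LinearMap.pi T)) :
    Module.finrank K (V ⧸ ⨅ i, LinearMap.ker (T i)) = ∑ i, Module.finrank K (Q i) := by
  rw [← LinearMap.ker_pi, ((LinearMap.pi T).quotKerEquivOfSurjective hT).finrank_eq,
    Module.finrank_pi_fintype]

variable (𝒜 I) in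
/-- The projection `A → (A ⧸ I)ₘ` onto the degree `m` part. -/
def degreeProj (m : ℕ) : A →ₗ[K] 𝒜 m ⧸ degreePart 𝒜 I m :=
  (degreePart 𝒜 I m).mkQ ∘ₗ component K ℕ (fun m => 𝒜 m) m ∘ₗ
    (decomposeLinearEquiv 𝒜).toLinearMap

lemma degreeProj_apply (m : ℕ) (a : A) :
    degreeProj 𝒜 I m a = Submodule.Quotient.mk (decompose 𝒜 a m) :=
  rfl

lemma surjective_pi_degreeProj (N : ℕ) :
    Function.Surjective (LinearMap.pi fun m : Fin N => degreeProj 𝒜 I m) := by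
  intro y
  choose z hz using fun m => Submodule.Quotient.mk_surjective _ (y m)
  refine ⟨∑ m, (z m : A), funext fun m => ?_⟩
  rw [LinearMap.pi_apply, degreeProj_apply, ← hz m]
  congr 1
  ext1
  rw [decompose_sum, DFinsupp.finsetSum_apply, Finset.sum_eq_single m]
  · simp
  · intro k _ hkm
    rw [decompose_coe, of_eq_of_ne]
    exact fun h => hkm (Fin.ext h.symm)
  · simp

lemma iInf_ker_degreeProj (hI : I.IsHomogeneous 𝒜) {N : ℕ} (hN : ∀ m ≥ N, ∀ x ∈ 𝒜 m, x ∈ I) :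
    ⨅ m : Fin N, LinearMap.ker (degreeProj 𝒜 I m) = I.restrictScalars K := by
  ext a
  simp only [Submodule.mem_iInf, LinearMap.mem_ker, degreeProj_apply,
    Submodule.Quotient.mk_eq_zero, mem_degreePart, Submodule.restrictScalars_mem]
  refine ⟨fun h => hI.mem_iff.2 fun m => ?_, fun ha m => hI m ha⟩
  rcases lt_or_ge m N with hm | hm
  · exact h ⟨m, hm⟩
  · exact hN m hm _ (SetLike.coe_mem _)

lemma finrank_quotient_eq_sum_hilbertFun [∀ m, Module.Finite K (𝒜 m)] (hI : I.IsHomogeneous 𝒜)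
    {N : ℕ} (hN : ∀ m ≥ N, ∀ x ∈ 𝒜 m, x ∈ I) :
    Module.finrank K (A ⧸ I) = ∑ m ∈ Finset.range N, hilbertFun 𝒜 I m := by
  have hfinrank := finrank_quotient_iInf_ker (K := K)
    (Q := fun m : Fin N => 𝒜 m ⧸ degreePart 𝒜 I m) (surjective_pi_degreeProj N)
  rw [iInf_ker_degreeProj hI hN] at hfinrank
  rw [Finset.sum_range]
  exact hfinrank

end HilbertSeries

section PowerSeries

open scoped PowerSeries

lemma eval_one_mul_prod_eq_prod_of_mul_prod_eq {ι R : Type*} [CommRing R] (s : Finset ι)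
    {w d : ι → ℕ} {P : Polynomial R}
    (h : P * ∏ i ∈ s, (1 - Polynomial.X ^ w i) = ∏ i ∈ s, (1 - Polynomial.X ^ d i)) :
    P.eval 1 * ∏ i ∈ s, (w i : R) = ∏ i ∈ s, (d i : R) := by
  have factor (v : ι → ℕ) : (∏ i ∈ s, (1 - Polynomial.X ^ v i) : Polynomial R) =
      (∏ i ∈ s, ∑ j ∈ Finset.range (v i), Polynomial.X ^ j) * (1 - Polynomial.X) ^ s.card := by
    rw [← Finset.prod_const, ← Finset.prod_mul_distrib]
    exact Finset.prod_congr rfl fun i _ => (geom_sum_mul_neg _ _).symm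
  have hregular : IsRegular (1 - Polynomial.X : Polynomial R) := by
    rw [← neg_sub, neg_eq_neg_one_mul, ← Polynomial.C_1]
    exact isUnit_one.neg.isRegular.mul (Polynomial.monic_X_sub_C 1).isRegular
  rw [factor, factor, ← mul_assoc] at h
  simpa [Polynomial.eval_prod, Polynomial.eval_finsetSum] using
    congrArg (Polynomial.eval 1) ((hregular.pow s.card).right h)

lemma sum_coeff_mul_prod_eq_prod_of_mul_prod_eq {ι R : Type*} [CommRing R] (s : Finset ι)
    {w d : ι → ℕ} {F : R⟦X⟧} {N : ℕ} (hF : ∀ m ≥ N, PowerSeries.coeff m F = 0)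
    (h : F * ∏ i ∈ s, (1 - PowerSeries.X ^ w i) = ∏ i ∈ s, (1 - PowerSeries.X ^ d i)) :
    (∑ m ∈ Finset.range N, PowerSeries.coeff m F) * ∏ i ∈ s, (w i : R) =
      ∏ i ∈ s, (d i : R) := by
  have htrunc : (PowerSeries.trunc N F : R⟦X⟧) = F := by
    ext m
    rw [Polynomial.coeff_coe, PowerSeries.coeff_trunc]
    split_ifs with hm
    · rfl
    · exact (hF m (not_lt.1 hm)).symm
  have coe_prod (v : ι → ℕ) : ((∏ i ∈ s, (1 - Polynomial.X ^ v i) : Polynomial R) : R⟦X⟧) =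
      ∏ i ∈ s, (1 - PowerSeries.X ^ v i) := by
    rw [← Polynomial.coeToPowerSeries.ringHom_apply, map_prod]
    simp
  have hpoly : PowerSeries.trunc N F * ∏ i ∈ s, (1 - Polynomial.X ^ w i) =
      ∏ i ∈ s, (1 - Polynomial.X ^ d i) := by
    apply Polynomial.coe_injective
    rw [Polynomial.coe_mul, coe_prod, coe_prod, htrunc, h]
  have heval : (PowerSeries.trunc N F).eval 1 =
      ∑ m ∈ Finset.range N, PowerSeries.coeff m F := by
    simpa using PowerSeries.eval₂_trunc_eq_sum_range (1 : R) (RingHom.id R) N F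
  rw [← heval]
  exact eval_one_mul_prod_eq_prod_of_mul_prod_eq s hpoly

end PowerSeries

section WeightedPolynomial

open RingTheory.Sequence

variable {σ R : Type*} [CommRing R]

lemma mem_idealOfVars_iff {p : MvPolynomial σ R} :
    p ∈ idealOfVars σ R ↔ constantCoeff p = 0 := by
  simpa [constantCoeff_eq, Nat.lt_one_iff, Finsupp.degree_eq_zero_iff] using
    mem_pow_idealOfVars_iff' 1 p

lemma isPrime_idealOfVars [IsDomain R] : (idealOfVars σ R).IsPrime := by
  have hker : idealOfVars σ R = RingHom.ker constantCoeff := by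
    ext p
    exact mem_idealOfVars_iff
  exact hker ▸ RingHom.ker_isPrime _

lemma ofList_map_X (l : List σ) :
    Ideal.ofList (l.map (X : σ → MvPolynomial σ R)) = Ideal.span (X '' {i | i ∈ l}) := by
  rw [Ideal.ofList]
  congr 1
  ext p
  simp

lemma mem_span_X_image_of_X_mul_mem {s : Set σ} {i : σ} (hi : i ∉ s)
    {p : MvPolynomial σ R} (hp : X i * p ∈ Ideal.span (X '' s)) : p ∈ Ideal.span (X '' s) := by
  rw [mem_ideal_span_X_image] at hp ⊢
  intro a ha
  obtain ⟨j, hj, hne⟩ := hp (Finsupp.single i 1 + a) (by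
    rwa [mem_support_iff, coeff_X_mul, ← mem_support_iff])
  have hij : i ≠ j := fun h => hi (h ▸ hj)
  rw [Finsupp.add_apply, Finsupp.single_eq_of_ne' hij, zero_add] at hne
  exact ⟨j, hj, hne⟩

lemma isWeaklyRegular_map_X {l : List σ} (hl : l.Nodup) :
    IsWeaklyRegular (MvPolynomial σ R) (l.map (X : σ → MvPolynomial σ R)) := by
  induction l using List.reverseRecOn with
  | nil => exact .nil _ _
  | append_singleton l i ih =>
    rw [List.nodup_append] at hl
    rw [List.map_append, List.map_singleton, isWeaklyRegular_self_append_singleton_iff,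
      ofList_map_X]
    refine ⟨ih hl.1, fun p hp => mem_span_X_image_of_X_mul_mem ?_ hp⟩
    exact fun hi => hl.2.2 i hi i (List.mem_singleton_self i) rfl

lemma exists_forall_weightedHomogeneousSubmodule_le [Finite σ] {I : Ideal (MvPolynomial σ R)}
    (hI : idealOfVars σ R ≤ I.radical) (w : σ → ℕ) :
    ∃ N, ∀ m ≥ N, ∀ p ∈ weightedHomogeneousSubmodule R w m, p ∈ I := by
  cases nonempty_fintype σ
  choose e he using fun i : σ => hI (Ideal.subset_span ⟨i, rfl⟩)
  refine ⟨∑ i, e i * w i + 1, fun m hm p hp => ?_⟩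
  rw [p.as_sum]
  refine Ideal.sum_mem _ fun a ha => ?_
  have hweight : Finsupp.weight w a = m := hp (mem_support_iff.1 ha)
  obtain ⟨i, hi⟩ : ∃ i, e i ≤ a i := by
    by_contra! hlt
    have hle : Finsupp.weight w a ≤ ∑ i, e i * w i := by
      rw [Finsupp.weight_apply, Finsupp.sum_fintype _ _ (by simp)]
      exact Finset.sum_le_sum fun i _ => Nat.mul_le_mul_right _ (hlt i).le
    lia
  have hdvd : X i ^ e i ∣ monomial a (coeff a p) := by
    rw [X_pow_eq_monomial, monomial_dvd_monomial]
    exact ⟨Or.inr (Finsupp.single_le_iff.2 hi), one_dvd _⟩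
  exact I.mem_of_dvd hdvd (he i)

variable {K : Type*} [Field K] {w : σ → ℕ}

attribute [local instance] weightedGradedAlgebra

lemma isUnit_decompose_zero (hw : ∀ i, w i ≠ 0) {p : MvPolynomial σ K}
    (hp : constantCoeff p ≠ 0) :
    IsUnit (DirectSum.decompose (weightedHomogeneousSubmodule K w) p 0 : MvPolynomial σ K) := by
  have hdecompose : (DirectSum.decompose (weightedHomogeneousSubmodule K w) p 0 :
      MvPolynomial σ K) = weightedHomogeneousComponent w 0 p := decompose'_apply K w p 0
  rw [hdecompose, weightedHomogeneousComponent_zero p hw]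
  exact (isUnit_iff_ne_zero.2 hp).map C

lemma hilbertSeries_idealOfVars :
    hilbertSeries (weightedHomogeneousSubmodule K w) (idealOfVars σ K) = 1 := by
  ext m
  rw [PowerSeries.coeff_one, hilbertSeries, PowerSeries.coeff_mk]
  split_ifs with hm
  · subst hm
    let c : weightedHomogeneousSubmodule K w 0 →ₗ[K] K := lcoeff K 0 ∘ₗ Submodule.subtype _
    have hker : LinearMap.ker c =
        degreePart (weightedHomogeneousSubmodule K w) (idealOfVars σ K) 0 := by
      ext p
      exact mem_idealOfVars_iff.symm
    have hsurj : Function.Surjective c := fun z =>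
      ⟨⟨C z, isWeightedHomogeneous_C w z⟩, coeff_zero_C z⟩
    rw [hilbertFun, ← hker, (c.quotKerEquivOfSurjective hsurj).finrank_eq, Module.finrank_self,
      Nat.cast_one]
  · rw [hilbertFun_eq_zero, Nat.cast_zero]
    refine fun p hp => mem_idealOfVars_iff.2 (IsWeightedHomogeneous.coeff_eq_zero hp 0 ?_)
    rw [map_zero]
    exact Ne.symm hm

theorem isWeaklyRegular_of_idealOfVars_le_radical [Fintype σ] (hw : ∀ i, w i ≠ 0)
    {f : σ → MvPolynomial σ K} {d : σ → ℕ} (hf : ∀ i, IsWeightedHomogeneous w (f i) (d i))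
    (hf₀ : ∀ i, constantCoeff (f i) = 0)
    (hrad : idealOfVars σ K ≤ (Ideal.span (Set.range f)).radical) :
    IsWeaklyRegular (MvPolynomial σ K) (Finset.univ.toList.map f) := by
  have := isPrime_idealOfVars (σ := σ) (R := K)
  let R := Localization.AtPrime (idealOfVars σ K)
  have hmax {p : MvPolynomial σ K} (hp : p ∈ idealOfVars σ K) :
      algebraMap _ R p ∈ IsLocalRing.maximalIdeal R :=
    (IsLocalization.AtPrime.to_map_mem_maximal_iff R _ p).2 hp
  have hX : IsWeaklyRegular R ((Finset.univ.toList.map X).map (algebraMap _ R)) :=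
    .of_isLocalization R (idealOfVars σ K).primeCompl
      (isWeaklyRegular_map_X (Finset.nodup_toList Finset.univ))
  refine isWeaklyRegular_of_map_localization (S := (idealOfVars σ K).primeCompl)
    (fun s hs => isUnit_decompose_zero hw (mem_idealOfVars_iff.not.1 hs)) hf ?_
  refine isWeaklyRegular_of_mem_radical (by simp) ?_ ?_ ?_ hX
  · simpa using fun i => hmax (Ideal.subset_span ⟨i, rfl⟩)
  · simpa using fun i => hmax (mem_idealOfVars_iff.2 (hf₀ i))
  · have hle : (idealOfVars σ K).map (algebraMap _ R) ≤
        (Ideal.ofList (Finset.univ.toList.map fun i => algebraMap _ R (f i)) ⊔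
          Module.annihilator R R).radical := by
      refine (Ideal.map_mono hrad).trans ((Ideal.map_radical_le _).trans (Ideal.radical_mono ?_))
      rw [← ofList_map_toList_univ, Ideal.map_ofList, List.map_map]
      exact le_sup_left
    simpa using fun i => hle (Ideal.mem_map_of_mem _ (Ideal.subset_span ⟨i, rfl⟩))

theorem finrank_quotient_mul_prod_weights [Fintype σ] (hw : ∀ i, w i ≠ 0)
    {f : σ → MvPolynomial σ K} {d : σ → ℕ} (hf : ∀ i, IsWeightedHomogeneous w (f i) (d i))
    (hf₀ : ∀ i, constantCoeff (f i) = 0)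
    (hrad : idealOfVars σ K ≤ (Ideal.span (Set.range f)).radical) :
    Module.finrank K (MvPolynomial σ K ⧸ Ideal.span (Set.range f)) * ∏ i, w i = ∏ i, d i := by
  have (m : ℕ) : Module.Finite K (weightedHomogeneousSubmodule K w m) :=
    Module.Finite.iff_fg.2 (weightedHomogeneousSubmodule_fg K w hw m)
  have hX := hilbertSeries_span_range (𝒜 := weightedHomogeneousSubmodule K w)
    (fun i => isWeightedHomogeneous_X K w i)
    (isWeaklyRegular_map_X (Finset.nodup_toList Finset.univ))
  rw [hilbertSeries_idealOfVars] at hX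
  have hfseries := hilbertSeries_span_range (𝒜 := weightedHomogeneousSubmodule K w) hf
    (isWeaklyRegular_of_idealOfVars_le_radical hw hf hf₀ hrad)
  obtain ⟨N, hN⟩ := exists_forall_weightedHomogeneousSubmodule_le hrad w
  have hhom : (Ideal.span (Set.range f)).IsHomogeneous (weightedHomogeneousSubmodule K w) :=
    ofList_map_toList_univ f ▸ isHomogeneous_ofList_map hf _
  rw [finrank_quotient_eq_sum_hilbertFun hhom hN]
  have hprod : hilbertSeries (weightedHomogeneousSubmodule K w) (Ideal.span (Set.range f)) *
      ∏ i, (1 - PowerSeries.X ^ w i) = ∏ i, (1 - PowerSeries.X ^ d i) := by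
    rw [hfseries, mul_assoc, mul_comm (hilbertSeries _ _), ← hX, mul_one]
  have hvanish (m : ℕ) (hm : m ≥ N) : PowerSeries.coeff m (hilbertSeries
      (weightedHomogeneousSubmodule K w) (Ideal.span (Set.range f))) = 0 := by
    rw [hilbertSeries, PowerSeries.coeff_mk, hilbertFun_eq_zero _ (hN m hm), Nat.cast_zero]
  have hsum := sum_coeff_mul_prod_eq_prod_of_mul_prod_eq _ hvanish hprod
  simp only [hilbertSeries, PowerSeries.coeff_mk] at hsum
  exact_mod_cast hsum

end WeightedPolynomial

section RationalWeights

variable {σ ι K : Type*} [Field K]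

lemma exists_natCast_eq_mul [Finite ι] {q : ι → ℚ} (hq : ∀ i, 0 ≤ q i) :
    ∃ N ≠ 0, ∃ w : ι → ℕ, ∀ i, (w i : ℚ) = (N : ℕ) * q i := by
  cases nonempty_fintype ι
  refine ⟨∏ i, (q i).den, Finset.prod_ne_zero_iff.2 fun i _ => (q i).den_nz, ?_⟩
  suffices h : ∀ i, ∃ w : ℕ, (w : ℚ) = (∏ j, (q j).den : ℕ) * q i from Classical.skolem.1 h
  intro i
  obtain ⟨c, hc⟩ : (q i).den ∣ ∏ j, (q j).den := Finset.dvd_prod_of_mem _ (Finset.mem_univ i)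
  obtain ⟨a, ha⟩ := Int.eq_ofNat_of_zero_le (Rat.num_nonneg.2 (hq i))
  refine ⟨c * a, ?_⟩
  have hnum : q i * (q i).den = a := by
    rw [Rat.mul_den_eq_num, ha, Int.cast_natCast]
  rw [hc, Nat.cast_mul, Nat.cast_mul, ← hnum]
  ring

lemma natCast_weight {w : σ → ℕ} {q : σ → ℚ} {N : ℕ} (hw : ∀ i, (w i : ℚ) = N * q i)
    (a : σ →₀ ℕ) : (Finsupp.weight w a : ℚ) = N * Finsupp.weight q a := by
  simp only [Finsupp.weight_apply, Finsupp.sum, Nat.cast_sum, nsmul_eq_mul, Nat.cast_mul,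
    Nat.cast_id, hw, Finset.mul_sum]
  exact Finset.sum_congr rfl fun i _ => mul_left_comm _ _ _

lemma isWeightedHomogeneous_of_natCast_eq_mul {w : σ → ℕ} {q : σ → ℚ} {N d : ℕ} {r : ℚ}
    (hw : ∀ i, (w i : ℚ) = N * q i) (hd : (d : ℚ) = N * r) {p : MvPolynomial σ K}
    (hp : IsWeightedHomogeneous q p r) : IsWeightedHomogeneous w p d := by
  intro a ha
  have hcast : (Finsupp.weight w a : ℚ) = d := by rw [natCast_weight hw, hp ha, hd]
  exact_mod_cast hcast

theorem finrank_quotient_eq_prod_div [Fintype σ] {q r : σ → ℚ} (hq : ∀ i, 0 < q i)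
    (hr : ∀ i, 0 ≤ r i) {f : σ → MvPolynomial σ K}
    (hf : ∀ i, IsWeightedHomogeneous q (f i) (r i)) (hf₀ : ∀ i, constantCoeff (f i) = 0)
    (hrad : idealOfVars σ K ≤ (Ideal.span (Set.range f)).radical) :
    (Module.finrank K (MvPolynomial σ K ⧸ Ideal.span (Set.range f)) : ℚ) = ∏ i, r i / q i := by
  obtain ⟨N, hN, v, hv⟩ := exists_natCast_eq_mul (q := Sum.elim q r)
    (Sum.forall.2 ⟨fun i => (hq i).le, hr⟩)
  obtain ⟨hw, hd⟩ := Sum.forall.1 hv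
  have hN' : (N : ℚ) ≠ 0 := Nat.cast_ne_zero.2 hN
  have hw₀ (i : σ) : v (.inl i) ≠ 0 := by
    rw [← Nat.cast_ne_zero (R := ℚ), hw]
    exact mul_ne_zero hN' (hq i).ne'
  have hbezout := congrArg (Nat.cast : ℕ → ℚ) (finrank_quotient_mul_prod_weights hw₀
    (fun i => isWeightedHomogeneous_of_natCast_eq_mul hw (hd i) (hf i)) hf₀ hrad)
  simp only [Nat.cast_mul, Nat.cast_prod] at hbezout
  rw [eq_div_of_mul_eq (Finset.prod_ne_zero_iff.2 fun i _ => Nat.cast_ne_zero.2 (hw₀ i)) hbezout,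
    ← Finset.prod_div_distrib]
  refine Finset.prod_congr rfl fun i _ => ?_
  rw [hw, hd]
  exact mul_div_mul_left _ _ hN'

end RationalWeights

section MilnorRing

lemma idealOfVars_le_radical {σ K : Type*} [Finite σ] [Field K] [IsAlgClosed K]
    {I : Ideal (MvPolynomial σ K)} (hI : ∀ x : σ → K, (∀ p ∈ I, eval x p = 0) → x = 0) :
    idealOfVars σ K ≤ I.radical := by
  rw [idealOfVars, Ideal.span_le]
  rintro _ ⟨i, rfl⟩
  rw [SetLike.mem_coe, ← vanishingIdeal_zeroLocus_eq_radical (K := K), mem_vanishingIdeal_iff]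
  intro x hx
  have hx₀ : x = 0 := hI x fun p hp => by
    rw [← aeval_eq_eval]
    exact mem_zeroLocus_iff.1 hx p hp
  rw [hx₀, aeval_X, Pi.zero_apply]

lemma eq_C_of_isWeightedHomogeneous_zero {σ R M : Type*} [CommRing R] [AddCommMonoid M]
    [PartialOrder M] [IsOrderedCancelAddMonoid M] {w : σ → M} (hw : ∀ i, 0 < w i)
    {p : MvPolynomial σ R} (hp : IsWeightedHomogeneous w p 0) : p = C (constantCoeff p) := by
  classical
  ext a
  rw [coeff_C]
  split_ifs with ha
  · rw [← ha, constantCoeff_eq]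
  · by_contra hcoeff
    refine (Finset.sum_pos (fun i hi => ?_) (Finsupp.support_nonempty_iff.2 (Ne.symm ha))).ne'
      (hp hcoeff)
    exact nsmul_pos (hw i) (Finsupp.mem_support_iff.1 hi)

lemma exists_single_mem_support_of_eval_ne_zero {σ R : Type*} [CommRing R] [DecidableEq σ]
    {i : σ} {c : R} {p : MvPolynomial σ R} (hp : eval (Pi.single i c) p ≠ 0) :
    ∃ k, Finsupp.single i k ∈ p.support := by
  rw [eval_eq] at hp
  obtain ⟨a, ha, hne⟩ := Finset.exists_ne_zero_of_sum_ne_zero hp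
  refine ⟨a i, ?_⟩
  convert ha
  ext j
  by_cases hj : j = i
  · rw [hj, Finsupp.single_eq_same]
  · rw [Finsupp.single_eq_of_ne hj, eq_comm, ← Finsupp.notMem_support_iff]
    intro hj'
    refine hne (mul_eq_zero_of_right _ (Finset.prod_eq_zero hj' ?_))
    rw [Pi.single_eq_of_ne hj, zero_pow (Finsupp.mem_support_iff.1 hj')]

variable {σ : Type*} {W : MvPolynomial σ ℂ} {q : σ → ℚ}

lemma IsQuasiHomogeneous.isWeightedHomogeneous [Fintype σ] (hW : IsQuasiHomogeneous W q) :
    IsWeightedHomogeneous q W 1 := by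
  intro a ha
  rw [Finsupp.weight_apply, Finsupp.sum_fintype _ _ (by simp)]
  simpa only [nsmul_eq_mul] using hW.2 a (mem_support_iff.2 ha)

lemma IsQuasiHomogeneous.isWeightedHomogeneous_pderiv [Fintype σ] (hW : IsQuasiHomogeneous W q)
    (i : σ) :
    IsWeightedHomogeneous q (pderiv i W) (1 - q i) :=
  hW.isWeightedHomogeneous.pderiv (sub_add_cancel _ _)

lemma IsQuasiHomogeneous.weight_eq_one [Fintype σ] (hW : IsQuasiHomogeneous W q) {i : σ}
    (hi : constantCoeff (pderiv i W) ≠ 0) : q i = 1 := by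
  have hweight := hW.isWeightedHomogeneous_pderiv i hi
  rw [map_zero] at hweight
  exact (sub_eq_zero.1 hweight.symm).symm

lemma Nondegenerate.idealOfVars_le_radical [Finite σ] (hW : Nondegenerate W) :
    idealOfVars σ ℂ ≤ (jacobianIdeal W).radical :=
  LG.idealOfVars_le_radical fun x hx => hW x fun i => hx _ (Ideal.subset_span ⟨i, rfl⟩)

lemma IsQuasiHomogeneous.weight_lt_one [Fintype σ] (hqh : IsQuasiHomogeneous W q)
    (hnd : Nondegenerate W) (h₀ : ∀ i, constantCoeff (pderiv i W) = 0) (i : σ) : q i < 1 := by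
  classical
  obtain ⟨j, hj⟩ : ∃ j, eval (Pi.single i 1) (pderiv j W) ≠ 0 := by
    by_contra! h
    exact one_ne_zero (Pi.single_eq_zero_iff.1 (hnd _ h))
  obtain ⟨k, hk⟩ := exists_single_mem_support_of_eval_ne_zero hj
  rw [mem_support_iff] at hk
  have hk₀ : k ≠ 0 := by
    rintro rfl
    rw [Finsupp.single_zero] at hk
    exact hk (h₀ j)
  have hweight := hqh.isWeightedHomogeneous_pderiv j hk
  rw [Finsupp.weight_single, nsmul_eq_mul] at hweight
  calc q i ≤ k * q i := le_mul_of_one_le_left (hqh.1 i).le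
        (Nat.one_le_cast.2 (Nat.one_le_iff_ne_zero.2 hk₀))
    _ = 1 - q j := hweight
    _ < 1 := sub_lt_self 1 (hqh.1 j)

lemma finrank_milnorRing_eq_zero [Fintype σ] (hqh : IsQuasiHomogeneous W q) {i : σ}
    (hi : constantCoeff (pderiv i W) ≠ 0) : Module.finrank ℂ (MilnorRing W) = 0 := by
  have hconst : pderiv i W = C (constantCoeff (pderiv i W)) := by
    refine eq_C_of_isWeightedHomogeneous_zero hqh.1 ?_
    rw [← sub_eq_zero.2 (hqh.weight_eq_one hi).symm]
    exact hqh.isWeightedHomogeneous_pderiv i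
  have hunit : IsUnit (pderiv i W) := hconst ▸ (isUnit_iff_ne_zero.2 hi).map C
  have htop : jacobianIdeal W = ⊤ :=
    Ideal.eq_top_of_isUnit_mem _ (Ideal.subset_span ⟨i, rfl⟩) hunit
  have : Subsingleton (MilnorRing W) := Ideal.Quotient.subsingleton_iff.2 htop
  exact Module.finrank_zero_of_subsingleton

end MilnorRing

end LG

theorem milnorRing_finrank_general {σ : Type*} [Fintype σ] (W : MvPolynomial σ ℂ) (q : σ → ℚ)
    (hnd : Nondegenerate W) (hqh : IsQuasiHomogeneous W q) :
    (Module.finrank ℂ (MilnorRing W) : ℚ) = ∏ i, (1 / q i - 1) := by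
  by_cases h₀ : ∀ i, constantCoeff (pderiv i W) = 0
  · calc (Module.finrank ℂ (MilnorRing W) : ℚ) = ∏ i, (1 - q i) / q i :=
          finrank_quotient_eq_prod_div hqh.1
            (fun i => sub_nonneg.2 (hqh.weight_lt_one hnd h₀ i).le)
            hqh.isWeightedHomogeneous_pderiv h₀ hnd.idealOfVars_le_radical
      _ = ∏ i, (1 / q i - 1) := Finset.prod_congr rfl fun i _ => by
          rw [sub_div, div_self (hqh.1 i).ne']
  · obtain ⟨i, hi⟩ := not_forall.1 h₀
    rw [finrank_milnorRing_eq_zero hqh hi, Nat.cast_zero, eq_comm]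
    refine Finset.prod_eq_zero (Finset.mem_univ i) ?_
    rw [hqh.weight_eq_one hi, div_one, sub_self]

/-- the dimension of the Milnor ring of a nondegenerate
quasihomogeneous polynomial with weights `qᵢ ∈ (0,1)` is `∏ᵢ (1/qᵢ - 1)`. -/
theorem milnorRing_finrank {n : ℕ}
    (W : MvPolynomial (Fin n) ℂ) (q : Fin n → ℚ)
    (hq : ∀ i, 0 < q i ∧ q i < 1)
    (hnd : Nondegenerate W) (hqh : IsQuasiHomogeneous W q) :
    (Module.finrank ℂ (MilnorRing W) : ℚ) = ∏ i, (1 / q i - 1) :=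
  milnorRing_finrank_general W q hnd hqh
end
end
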